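/- If G is a 2-connected finite simple graph whose longest cycle has length at most c, then the treedepth of G is at most c²/2. -/

import Mathlib

/-- A finite simple graph is 2-connected: it has at least 3 vertices and deleting
any single vertex leaves it connected. -/
def TwoConnected {V : Type*} [Fintype V] (G : SimpleGraph V) : Prop :=
  3 ≤ Fintype.card V ∧ ∀ v : V, (G.induce ({v}ᶜ : Set V)).Connected

/-- `TreedepthLE G d`: G has treedepth at most `d`, i.e. G is a subgraph of the
closure of a rooted forest of height at most `d - 1` on its vertex set. The forest
is encoded by a parent function `par` whose fixed points are the roots; height at
most `d - 1` means iterating `par` `d - 1` times from any vertex reaches a root,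
and every edge of G must join an ancestor-descendant pair of the forest. -/
def TreedepthLE {V : Type*} (G : SimpleGraph V) (d : ℕ) : Prop :=
  ∃ par : V → V,
    (∀ v : V, par^[d] v = par^[d - 1] v) ∧
    (∀ u v : V, G.Adj u v → (∃ k : ℕ, par^[k] v = u) ∨ (∃ k : ℕ, par^[k] u = v))


open SimpleGraph

lemma path_append_aux {V : Type*} {G : SimpleGraph V} {u v w : V} {p : G.Walk u v}
    {q : G.Walk v w} (hp : p.IsPath) (hq : q.IsPath)
    (h : ∀ x, x ∈ p.support → x ∈ q.support → x = v) : (p.append q).IsPath := by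
  rw [Walk.isPath_def, Walk.support_append, List.nodup_append']
  refine ⟨hp.support_nodup, hq.support_nodup.tail, ?_⟩
  intro x hx hx'
  have := h x hx (List.mem_of_mem_tail hx')
  subst this
  have hn := hq.support_nodup
  rw [← Walk.cons_tail_support] at hn
  exact (List.nodup_cons.mp hn).1 hx'

lemma cycle_of_two_paths {V : Type*} {G : SimpleGraph V} {u v : V} {p q : G.Walk u v}
    (hp : p.IsPath) (hq : q.IsPath)
    (h : ∀ x, x ∈ p.support → x ∈ q.support → x = u ∨ x = v)
    (hl : 3 ≤ p.length + q.length) : (p.append q.reverse).IsCycle := by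
  refine hp.isCycle_append hq.reverse ?_ ?_
  · intro x hx hx'
    have h1 : x ∈ p.support := List.mem_of_mem_tail hx
    have h2 : x ∈ q.support := by simpa using List.mem_of_mem_tail hx'
    have hn := hp.support_nodup
    rw [← Walk.cons_tail_support] at hn
    have hn' := hq.reverse.support_nodup
    rw [← Walk.cons_tail_support] at hn'
    rcases h x h1 h2 with rfl | rfl
    · exact (List.nodup_cons.mp hn).1 hx
    · exact (List.nodup_cons.mp hn').1 hx'
  · simp only [Walk.length_reverse]; omega

/-- From a walk meeting `S`, extract a path from the last vertex in `S` to the end. -/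
lemma last_in_set {V : Type*} {G : SimpleGraph V} (S : Set V) {u v : V} (R : G.Walk u v)
    (h : ∃ x ∈ R.support, x ∈ S) :
    ∃ z ∈ S, ∃ R' : G.Walk z v, R'.IsPath ∧ (∀ x ∈ R'.support, x ∈ S → x = z) ∧
      ∀ x ∈ R'.support, x ∈ R.support := by
  classical
  induction R with
  | nil =>
    obtain ⟨x, hx, hxS⟩ := h
    simp only [Walk.support_nil, List.mem_singleton] at hx
    subst hx
    exact ⟨x, hxS, Walk.nil, by simp, by simp, by simp⟩
  | @cons a b c hab R ih =>
    by_cases hR : ∃ x ∈ R.support, x ∈ S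
    · obtain ⟨z, hz, R', h1, h2, h3⟩ := ih hR
      exact ⟨z, hz, R', h1, h2, fun x hx => by simp [h3 x hx]⟩
    · push Not at hR
      obtain ⟨x, hx, hxS⟩ := h
      have hxa : x = a := by
        rcases List.mem_cons.mp (by simpa using hx) with h | h
        · exact h
        · exact absurd hxS (hR x h)
      subst hxa
      have hsub := (Walk.cons hab R).support_bypass_subset_support
      refine ⟨x, hxS, (Walk.cons hab R).bypass, Walk.bypass_isPath _, ?_, fun y hy => hsub hy⟩
      intro y hy hyS
      rcases List.mem_cons.mp (by simpa using hsub hy) with h | h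
      · exact h
      · exact absurd hyS (hR y h)

/-- The initial segment of a walk up to the first vertex in `S`. -/
lemma first_in_set {V : Type*} {G : SimpleGraph V} (S : Set V) {u v : V} (R : G.Walk u v)
    (h : v ∈ S) :
    ∃ z ∈ S, ∃ (A : G.Walk u z) (B : G.Walk z v), R = A.append B ∧
      ∀ x ∈ A.support, x ∈ S → x = z := by
  induction R with
  | nil => exact ⟨_, h, Walk.nil, Walk.nil, rfl, by simp⟩
  | @cons a b c hab R ih =>
    by_cases ha : a ∈ S
    · exact ⟨a, ha, Walk.nil, Walk.cons hab R, rfl, by simp⟩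
    · obtain ⟨z, hz, A, B, h1, h2⟩ := ih h
      refine ⟨z, hz, Walk.cons hab A, B, by simp [h1], ?_⟩
      intro x hx hxS
      rcases List.mem_cons.mp (by simpa using hx) with h | h
      · subst h; exact absurd hxS ha
      · exact h2 x h hxS

lemma walk_avoiding {V : Type*} [Fintype V] {G : SimpleGraph V} (h2 : TwoConnected G)
    {w u v : V} (hu : u ≠ w) (hv : v ≠ w) : ∃ p : G.Walk u v, w ∉ p.support := by
  obtain ⟨p⟩ := (h2.2 w).preconnected ⟨u, by simpa using hu⟩ ⟨v, by simpa using hv⟩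
  refine ⟨p.map (Embedding.induce _).toHom, ?_⟩
  erw [Walk.support_map]
  intro h
  obtain ⟨x, _, hx⟩ := List.mem_map.mp h
  have := x.2
  simp only [Set.mem_compl_iff, Set.mem_singleton_iff] at this
  exact this hx

lemma third_vertex {V : Type*} [Fintype V] (h : 3 ≤ Fintype.card V) (u v : V) :
    ∃ t, t ≠ u ∧ t ≠ v := by
  classical
  by_contra hc
  push Not at hc
  have : (Finset.univ : Finset V) ⊆ {u, v} := by
    intro t _
    by_cases ht : t = u
    · simp [ht]
    · simp [hc t ht]
  have h1 := Finset.card_le_card this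
  have h2 := Finset.card_le_two (a := u) (b := v)
  rw [Finset.card_univ] at h1
  omega

lemma TwoConnected.connected_aux {V : Type*} [Fintype V] {G : SimpleGraph V}
    (h2 : TwoConnected G) : G.Connected := by
  have : Nonempty V := Fintype.card_pos_iff.mp (by have := h2.1; omega)
  refine ⟨fun u v => ?_⟩
  obtain ⟨t, h1, h3⟩ := third_vertex h2.1 u v
  obtain ⟨p, -⟩ := walk_avoiding h2 h1.symm h3.symm
  exact ⟨p⟩

lemma extend_aux {V : Type*} {G : SimpleGraph V} {u w v : V} {p q : G.Walk u w}
    (hp : p.IsPath) (hq : q.IsPath) (huw : u ≠ w) (huv : u ≠ v) (hwv : G.Adj w v)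
    (hd : ∀ x, x ∈ p.support → x ∈ q.support → x = u ∨ x = w)
    {z : V} (hz : z ∈ p.support) (hzw : z ≠ w) {R : G.Walk z v} (hR : R.IsPath)
    (hRw : w ∉ R.support)
    (hRS : ∀ x ∈ R.support, x ∈ p.support ∨ x ∈ q.support → x = z) :
    ∃ p' q' : G.Walk u v, p'.IsPath ∧ q'.IsPath ∧
      (∀ x, x ∈ p'.support → x ∈ q'.support → x = u ∨ x = v) ∧
      3 ≤ p'.length + q'.length := by
  classical
  have hvq : v ∉ q.support := by
    intro hv
    have h1 := hRS v R.end_mem_support (Or.inr hv)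
    subst h1
    rcases hd v hz hv with h | h
    · exact huv h.symm
    · exact hzw h
  have hwt : w ∉ (p.takeUntil z hz).support :=
    Walk.endpoint_notMem_support_takeUntil hp hz hzw.symm
  refine ⟨(p.takeUntil z hz).append R, q.concat hwv, ?_, ?_, ?_, ?_⟩
  · refine path_append_aux (hp.takeUntil hz) hR fun x hx hx' => ?_
    exact hRS x hx' (Or.inl (p.support_takeUntil_subset_support hz hx))
  · rw [Walk.concat_eq_append]
    refine path_append_aux hq (by simp [hwv.ne]) fun x hx hx' => ?_
    simp only [Walk.support_cons, Walk.support_nil, List.mem_cons, List.not_mem_nil,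
      or_false] at hx'
    rcases hx' with h | h
    · exact h
    · subst h; exact absurd hx hvq
  · intro x hx hx'
    rw [Walk.support_concat] at hx'
    simp only [List.mem_append, List.mem_singleton] at hx'
    rcases hx' with hx' | hx'
    · left
      rcases (Walk.mem_support_append_iff _ _).mp hx with h | h
      · rcases hd x (p.support_takeUntil_subset_support hz h) hx' with h' | h'
        · exact h'
        · subst h'; exact absurd h hwt
      · have := hRS x h (Or.inr hx')
        subst this
        rcases hd x hz hx' with h' | h'
        · exact h'
        · exact absurd h' hzw
    · exact Or.inr hx'
  · have h1 : 0 < q.length := by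
      rw [Nat.pos_iff_ne_zero]
      intro h; exact huw (Walk.eq_of_length_eq_zero h)
    have h3 : 0 < ((p.takeUntil z hz).append R).length := by
      rw [Nat.pos_iff_ne_zero]
      intro h; exact huv (Walk.eq_of_length_eq_zero h)
    rw [Walk.length_concat]; omega

lemma two_paths {V : Type*} [Fintype V] {G : SimpleGraph V} (h2 : TwoConnected G)
    {v u : V} (W : G.Walk v u) (huv : u ≠ v) :
    ∃ p q : G.Walk u v, p.IsPath ∧ q.IsPath ∧
      (∀ x, x ∈ p.support → x ∈ q.support → x = u ∨ x = v) ∧ 3 ≤ p.length + q.length := by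
  induction W with
  | nil => exact absurd rfl huv
  | @cons v w u hvw W ih =>
    by_cases huw : u = w
    · subst huw
      -- `u` adjacent to `v`
      obtain ⟨s, hsu, hsv⟩ := third_vertex h2.1 u v
      obtain ⟨P, hP⟩ := walk_avoiding h2 huv hsv
      cases P with
      | nil => exact absurd rfl hsu
      | @cons _ t _ hut P' =>
        have htv : t ≠ v := by
          rintro rfl
          exact hP (by simp)
        obtain ⟨R, hR⟩ := walk_avoiding h2 hut.ne.symm hvw.ne
        classical
        have hRb : u ∉ R.bypass.support := fun h => hR (R.support_bypass_subset_support h)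
        refine ⟨Walk.cons hut R.bypass, Walk.cons hvw.symm Walk.nil, ?_, ?_, ?_, ?_⟩
        · exact (Walk.cons_isPath_iff _ _).mpr ⟨R.bypass_isPath, hRb⟩
        · simp [huv]
        · intro x _ hx; simpa using hx
        · have h3 : 0 < R.bypass.length := by
            rw [Nat.pos_iff_ne_zero]
            intro h; exact htv (Walk.eq_of_length_eq_zero h)
          simp only [Walk.length_cons, Walk.length_nil]; omega
    · obtain ⟨p, q, hp, hq, hd, -⟩ := ih huw
      obtain ⟨R, hR⟩ := walk_avoiding h2 huw hvw.ne
      obtain ⟨z, hz, R', h1, h3, h4⟩ := last_in_set {x | x ∈ p.support ∨ x ∈ q.support} R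
        ⟨u, R.start_mem_support, Or.inl p.start_mem_support⟩
      have hwR' : w ∉ R'.support := fun h => hR (h4 _ h)
      have hzw : z ≠ w := by
        rintro rfl; exact hwR' R'.start_mem_support
      rcases hz with hz | hz
      · exact extend_aux hp hq huw huv hvw.symm hd hz hzw h1 hwR' h3
      · exact extend_aux hq hp huw huv hvw.symm (fun x a b => hd x b a) hz hzw h1 hwR'
          (fun x hx hx' => h3 x hx hx'.symm)

lemma pieces_bound {V : Type*} [DecidableEq V] {G : SimpleGraph V} (S : Finset V) (M : ℕ)
    (H : ∀ (u v : V) (W : G.Walk u v), u ∈ S → v ∈ S → u ≠ v → W.IsPath →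
      (∀ x ∈ W.support, x ∈ S → x = u ∨ x = v) → W.length ≤ M) (n : ℕ) :
    ∀ (a y : V) (P : G.Walk a y), P.length = n → P.IsPath → a ∈ S → y ∈ S →
      P.length ≤ ((S.filter (· ∈ P.support)).card - 1) * M := by
  induction n using Nat.strong_induction_on with
  | _ n ih =>
    intro a y P hn hP ha hy
    cases P with
    | nil => simp
    | @cons _ b _ hab P' =>
      obtain ⟨z, hz, A, B, rfl, hA⟩ := first_in_set (S : Set V) P' hy
      rw [Walk.cons_isPath_iff] at hP
      obtain ⟨hPp, haP⟩ := hP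
      have haA : a ∉ A.support := fun h => haP ((Walk.mem_support_append_iff _ _).mpr (Or.inl h))
      have haB : a ∉ B.support := fun h => haP ((Walk.mem_support_append_iff _ _).mpr (Or.inr h))
      have haz : a ≠ z := by
        rintro rfl; exact haB B.start_mem_support
      have h1 : (Walk.cons hab A).length ≤ M := by
        refine H a z _ ha hz haz ?_ ?_
        · exact (Walk.cons_isPath_iff _ _).mpr ⟨hPp.of_append_left, haA⟩
        · intro x hx hxS
          rcases List.mem_cons.mp (by simpa using hx) with h | h
          · exact Or.inl h
          · exact Or.inr (hA x h hxS)
      have h2 := ih B.length (by simp at hn; omega) z y B rfl hPp.of_append_right hz hy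
      have h3 : (S.filter (· ∈ B.support)).card + 1 ≤
          (S.filter (· ∈ (Walk.cons hab (A.append B)).support)).card := by
        rw [← Finset.card_insert_of_notMem (a := a) (s := S.filter (· ∈ B.support))
          (by simp [haB])]
        apply Finset.card_le_card
        intro x hx
        simp only [Finset.mem_insert, Finset.mem_filter] at hx ⊢
        rcases hx with rfl | ⟨hxS, hx⟩
        · exact ⟨ha, by simp⟩
        · refine ⟨hxS, ?_⟩
          simp [hx]
      have h4 : 0 < (S.filter (· ∈ B.support)).card :=
        Finset.card_pos.mpr ⟨z, by simp only [Finset.mem_filter]; exact ⟨hz, B.start_mem_support⟩⟩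
      have h5 : (((S.filter (· ∈ B.support)).card - 1) + 1) * M ≤
          ((S.filter (· ∈ (Walk.cons hab (A.append B)).support)).card - 1) * M :=
        Nat.mul_le_mul_right _ (by omega)
      rw [Nat.add_mul] at h5
      simp only [Walk.length_cons, Walk.length_append] at h1 ⊢
      omega

/-- An ear of a cycle together with the longer arc gives a cycle. -/
lemma ear_bound {V : Type*} {G : SimpleGraph V} (c : ℕ)
    (hmax : ∀ (w : V) (d : G.Walk w w), d.IsCycle → d.length ≤ c)
    {a : V} (C : G.Walk a a) (hC : C.IsCycle) {u v : V} (W : G.Walk u v)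
    (hu : u ∈ C.support) (hv : v ∈ C.support) (huv : u ≠ v) (hW : W.IsPath)
    (hd : ∀ x ∈ W.support, x ∈ C.support → x = u ∨ x = v) :
    2 * W.length + C.length ≤ 2 * c := by
  classical
  have hD : (C.rotate u hu).IsCycle := hC.rotate hu
  have hv' : v ∈ (C.rotate u hu).support := by simpa using hv
  have hlen : (C.rotate u hu).length = C.length := by simp
  have hmem : ∀ x, x ∈ (C.rotate u hu).support → x ∈ C.support := by simp
  generalize C.rotate u hu = D at hD hv' hlen hmem
  obtain ⟨A, B, rfl⟩ := D.mem_support_iff_exists_append.mp hv'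
  have hA : A.IsPath := hD.isPath_of_append_left (Walk.not_nil_of_ne huv.symm)
  have hB : B.IsPath := hD.isPath_of_append_right (Walk.not_nil_of_ne huv)
  have h3 := hD.three_le_length
  have hWl : 0 < W.length := by
    rw [Nat.pos_iff_ne_zero]
    intro h; exact huv (Walk.eq_of_length_eq_zero h)
  rw [Walk.length_append] at hlen h3
  rcases le_total A.length B.length with hAB | hAB
  · have := hmax _ _ (cycle_of_two_paths (p := W) (q := B.reverse) hW hB.reverse
      (fun x hx hx' => hd x hx (hmem x ((Walk.mem_support_append_iff _ _).mpr
        (Or.inr (by simpa using hx'))))) (by rw [Walk.length_reverse]; omega))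
    simp only [Walk.length_append, Walk.length_reverse] at this
    omega
  · have := hmax _ _ (cycle_of_two_paths (p := W) (q := A) hW hA
      (fun x hx hx' => hd x hx (hmem x ((Walk.mem_support_append_iff _ _).mpr
        (Or.inl hx')))) (by omega))
    simp only [Walk.length_append, Walk.length_reverse] at this
    omega

lemma dirac_bound {V : Type*} [Fintype V] {G : SimpleGraph V} (h2 : TwoConnected G) (c : ℕ)
    (hmax : ∀ (w : V) (d : G.Walk w w), d.IsCycle → d.length ≤ c)
    {x y : V} (P : G.Walk x y) (hP : P.IsPath) (hxy : x ≠ y) :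
    3 ≤ c ∧ 2 * P.length ≤ c * (c - 1) := by
  classical
  obtain ⟨p, q, hp, hq, hd, hl⟩ := two_paths h2 P.reverse hxy
  have hC := cycle_of_two_paths hp hq hd hl
  have hxC : x ∈ (p.append q.reverse).support := Walk.start_mem_support _
  have hyC : y ∈ (p.append q.reverse).support := by simp
  generalize p.append q.reverse = C at hC hxC hyC
  have hk3 := hC.three_le_length
  have hkc := hmax _ _ hC
  have hcard : C.support.toFinset.card ≤ C.length := by
    have : C.support.toFinset = C.support.tail.toFinset := by
      ext t
      simp only [List.mem_toFinset]
      constructor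
      · intro ht
        rcases (Walk.mem_support_iff C).mp ht with h | h
        · subst h; exact Walk.end_mem_tail_support hC.not_nil
        · exact h
      · exact List.mem_of_mem_tail
    rw [this]
    refine (List.toFinset_card_le _).trans ?_
    simp
  have hb := pieces_bound (G := G) C.support.toFinset ((2 * c - C.length) / 2) (by
    intro u v W hu hv huv hW hWd
    have := ear_bound c hmax C hC W (by simpa using hu) (by simpa using hv) huv hW
      (fun t ht ht' => hWd t ht (by simpa using ht'))
    omega) P.length x y P rfl hP (by simpa using hxC) (by simpa using hyC)
  refine ⟨by omega, ?_⟩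
  have h5 : (C.support.toFinset.filter (· ∈ P.support)).card ≤ C.length :=
    (Finset.card_filter_le _ _).trans hcard
  have h6 : P.length ≤ (C.length - 1) * ((2 * c - C.length) / 2) :=
    hb.trans (Nat.mul_le_mul_right _ (by omega))
  have h7 : 2 * P.length ≤ (C.length - 1) * (2 * c - C.length) := by
    calc 2 * P.length ≤ (C.length - 1) * (2 * ((2 * c - C.length) / 2)) := by
          rw [Nat.mul_left_comm]; omega
      _ ≤ _ := Nat.mul_le_mul_left _ (by omega)
  refine h7.trans ?_
  obtain ⟨j, hj⟩ : ∃ j, C.length = j + 1 := ⟨C.length - 1, by omega⟩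
  obtain ⟨i, hi⟩ : ∃ i, c = j + 1 + i := ⟨c - (j + 1), by omega⟩
  rw [hj, hi, show j + 1 - 1 = j by omega, show 2 * (j + 1 + i) - (j + 1) = j + 1 + 2 * i by omega,
    show j + 1 + i - 1 = j + i by omega]
  nlinarith

/-- Rooted spanning tree at `r`, with depth function. -/
def RTree {V : Type*} (G : SimpleGraph V) (r : V) (par : V → V) (f : V → ℕ) : Prop :=
  par r = r ∧ f r = 0 ∧ ∀ v, v ≠ r → G.Adj v (par v) ∧ f v = f (par v) + 1

lemma RTree.path {V : Type*} {G : SimpleGraph V} {r : V} {par : V → V} {f : V → ℕ}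
    (h : RTree G r par f) (n : ℕ) : ∀ v, f v = n →
    ∃ p : G.Walk v r, p.IsPath ∧ p.length = n ∧ ∀ x ∈ p.support, f x ≤ n := by
  induction n with
  | zero =>
    intro v hv
    have : v = r := by
      by_contra hne
      have := (h.2.2 v hne).2
      omega
    subst this
    exact ⟨Walk.nil, by simp, rfl, by simp [hv]⟩
  | succ n ih =>
    intro v hv
    have hne : v ≠ r := by
      rintro rfl
      have := h.2.1
      omega
    obtain ⟨hadj, hf⟩ := h.2.2 v hne
    obtain ⟨p, h1, h2, h3⟩ := ih (par v) (by omega)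
    refine ⟨Walk.cons hadj p, ?_, by simp [h2], ?_⟩
    · refine (Walk.cons_isPath_iff _ _).mpr ⟨h1, fun hm => ?_⟩
      have := h3 v hm
      omega
    · intro x hx
      rcases List.mem_cons.mp (by simpa using hx) with h | h
      · subst h; omega
      · have := h3 x h; omega

lemma RTree.iterate {V : Type*} {G : SimpleGraph V} {r : V} {par : V → V} {f : V → ℕ}
    (h : RTree G r par f) (n : ℕ) : ∀ v, f v ≤ n → par^[n] v = r := by
  induction n with
  | zero =>
    intro v hv
    by_contra hne
    have := (h.2.2 v hne).2
    omega
  | succ n ih =>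
    intro v hv
    rw [Function.iterate_succ_apply]
    by_cases hne : v = r
    · subst hne
      rw [h.1]; exact ih _ (by have := h.2.1; omega)
    · exact ih _ (by have := (h.2.2 v hne).2; omega)

lemma RTree.exists_bfs {V : Type*} {G : SimpleGraph V} (hG : G.Connected) (r : V) :
    ∃ par f, RTree G r par f := by
  classical
  have key : ∀ v, v ≠ r → ∃ w, G.Adj v w ∧ G.dist v r = G.dist w r + 1 := by
    intro v hv
    obtain ⟨p, hp⟩ := (hG.preconnected v r).exists_walk_length_eq_dist
    cases p with
    | nil => exact absurd rfl hv
    | @cons _ w _ hvw p =>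
      refine ⟨w, hvw, ?_⟩
      have h1 : G.dist w r ≤ p.length := dist_le p
      obtain ⟨p', hp'⟩ := (hG.preconnected w r).exists_walk_length_eq_dist
      have h2 := dist_le (Walk.cons hvw p')
      simp only [Walk.length_cons] at hp h2
      omega
  choose g hg using key
  refine ⟨fun v => if h : v = r then r else g v h, fun v => G.dist v r, by simp, by simp, ?_⟩
  intro v hv
  simpa [hv] using hg v hv

lemma RTree.reparent {V : Type*} {G : SimpleGraph V} {r : V} [Fintype V] {par : V → V}
    {f : V → ℕ} (h : RTree G r par f) {u v : V} (huv : G.Adj u v) (hle : f u ≤ f v)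
    (hnd : ¬ ∃ k, par^[k] v = u) :
    ∃ par' f', RTree G r par' f' ∧ ∑ x, f x < ∑ x, f' x := by
  classical
  have hur : u ≠ r := by
    rintro rfl
    exact hnd ⟨f v, h.iterate _ v le_rfl⟩
  have hrd : ¬ ∃ k, par^[k] r = u := by
    rintro ⟨k, hk⟩
    rw [Function.iterate_fixed h.1] at hk
    exact hur hk.symm
  have hud : ∃ k, par^[k] u = u := ⟨0, rfl⟩
  refine ⟨Function.update par u v,
    fun w => if ∃ k, par^[k] w = u then f w + (f v + 1 - f u) else f w, ⟨?_, ?_, ?_⟩, ?_⟩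
  · rw [Function.update_of_ne hur.symm, h.1]
  · simp only [if_neg hrd]; exact h.2.1
  · intro w hw
    by_cases hwu : w = u
    · subst hwu
      simp only [Function.update_self, if_pos hud, if_neg hnd]
      exact ⟨huv, by omega⟩
    · rw [Function.update_of_ne hwu]
      obtain ⟨h1, h2⟩ := h.2.2 w hw
      refine ⟨h1, ?_⟩
      have hiff : (∃ k, par^[k] w = u) ↔ ∃ k, par^[k] (par w) = u := by
        constructor
        · rintro ⟨k, hk⟩
          cases k with
          | zero => exact absurd hk hwu
          | succ k => exact ⟨k, by rwa [Function.iterate_succ_apply] at hk⟩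
        · rintro ⟨k, hk⟩
          exact ⟨k + 1, by rwa [Function.iterate_succ_apply]⟩
      by_cases hd : ∃ k, par^[k] (par w) = u
      · simp only [if_pos hd, if_pos (hiff.mpr hd)]; omega
      · simp only [if_neg hd, if_neg (fun hh => hd (hiff.mp hh))]; omega
  · refine Finset.sum_lt_sum ?_ ⟨u, Finset.mem_univ _, ?_⟩
    · intro w _
      split_ifs <;> omega
    · simp only [if_pos hud]; omega

/-- Existence of a depth-first search tree, given a bound on path lengths. -/
lemma exists_dfs {V : Type*} {G : SimpleGraph V} [Fintype V] (hG : G.Connected) (r : V) (M : ℕ)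
    (hM : ∀ v, ∀ p : G.Walk v r, p.IsPath → p.length ≤ M) :
    ∃ par f, RTree G r par f ∧ ∀ u v, G.Adj u v → (∃ k, par^[k] v = u) ∨ ∃ k, par^[k] u = v := by
  classical
  let Q : ℕ → Prop := fun n => ∃ par f, RTree G r par f ∧ ∑ x, f x = n
  have hbd : ∀ n, Q n → n ≤ Fintype.card V * M := by
    rintro n ⟨par, f, h, rfl⟩
    have : ∀ x ∈ (Finset.univ : Finset V), f x ≤ M := by
      intro x _
      obtain ⟨p, hp, hl, -⟩ := h.path _ x rfl
      rw [← hl]; exact hM x p hp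
    simpa using Finset.sum_le_card_nsmul _ _ _ this
  obtain ⟨par0, f0, h0⟩ := RTree.exists_bfs hG r
  have hQ : Q (Nat.findGreatest Q (Fintype.card V * M)) :=
    Nat.findGreatest_spec (hbd _ ⟨par0, f0, h0, rfl⟩) ⟨par0, f0, h0, rfl⟩
  obtain ⟨par, f, h, hs⟩ := hQ
  have hopt : ∀ par' f', RTree G r par' f' → ∑ x, f' x ≤ ∑ x, f x := by
    intro par' f' h'
    rw [hs]
    exact Nat.le_findGreatest (hbd _ ⟨par', f', h', rfl⟩) ⟨par', f', h', rfl⟩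
  refine ⟨par, f, h, fun u v huv => ?_⟩
  by_contra hc
  push Not at hc
  rcases le_total (f u) (f v) with hle | hle
  · obtain ⟨par', f', h', hlt⟩ := h.reparent huv hle (by push Not; exact hc.1)
    have := hopt _ _ h'
    omega
  · obtain ⟨par', f', h', hlt⟩ := h.reparent huv.symm hle (by push Not; exact hc.2)
    have := hopt _ _ h'
    omega

/-- A 2-connected graph whose cycles all have length at most c has treedepth at
most c²/2. -/
theorem treedepth_le_of_circumference {V : Type*} [Fintype V] (G : SimpleGraph V)
    (h2 : TwoConnected G) (c : ℕ)
    (hmax : ∀ (w : V) (d : G.Walk w w), d.IsCycle → d.length ≤ c) :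
    TreedepthLE G (c ^ 2 / 2) := by
  have hG := h2.connected_aux
  obtain ⟨r⟩ := hG.nonempty
  obtain ⟨t, htr, -⟩ := third_vertex h2.1 r r
  have hc : 3 ≤ c := by
    classical
    obtain ⟨p⟩ := hG.preconnected t r
    exact (dirac_bound h2 c hmax p.bypass p.bypass_isPath htr).1
  have hM : ∀ v, ∀ p : G.Walk v r, p.IsPath → p.length ≤ c ^ 2 / 2 - 1 := by
    intro v p hp
    by_cases hv : v = r
    · subst hv
      have : p.length = 0 := by rw [Walk.isPath_iff_eq_nil.mp hp]; rfl
      omega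
    · have h3 := (dirac_bound h2 c hmax p hp hv).2
      obtain ⟨i, rfl⟩ : ∃ i, c = i + 3 := ⟨c - 3, by omega⟩
      have h4 : 2 * p.length + 2 ≤ (i + 3) ^ 2 := by
        rw [show i + 3 - 1 = i + 2 by omega] at h3
        nlinarith
      omega
  obtain ⟨par, f, h, hanc⟩ := exists_dfs hG r _ hM
  refine ⟨par, fun v => ?_, hanc⟩
  have hf : f v ≤ c ^ 2 / 2 - 1 := by
    obtain ⟨p, hp, hl, -⟩ := h.path _ v rfl
    rw [← hl]; exact hM v p hp
  rw [h.iterate _ v hf, h.iterate _ v (by omega)]
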